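/- The one-step rewrite relation → of the name algebra is terminating: there is no infinite sequence of terms t₀ → t₁ → t₂ → ⋯ ; equivalently, the converse of the relation → is a well-founded relation on Term. -/

import Mathlib

/-- Terms of the name algebra over atoms in ℕ. -/
inductive Term : Type
  | var : ℕ → Term
  | projL : Term → Term
  | projR : Term → Term
  | join : Term → Term → Term
deriving DecidableEq

/-- One-step rewrite relation: the three rules `(u ∧ v).l → u`, `(u ∧ v).r → v`,
`(u.l ∧ u.r) → u`, closed under all term contexts. -/
inductive Step : Term → Term → Prop
  | splitL (u v : Term) : Step (Term.projL (Term.join u v)) u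
  | splitR (u v : Term) : Step (Term.projR (Term.join u v)) v
  | merge (u : Term) : Step (Term.join (Term.projL u) (Term.projR u)) u
  | congL {a b : Term} : Step a b → Step (Term.projL a) (Term.projL b)
  | congR {a b : Term} : Step a b → Step (Term.projR a) (Term.projR b)
  | congJoinL {a b : Term} (v : Term) : Step a b → Step (Term.join a v) (Term.join b v)
  | congJoinR {a b : Term} (u : Term) : Step a b → Step (Term.join u a) (Term.join u b)

/-- Reflexive-transitive closure of `Step`. -/
def Steps : Term → Term → Prop := Relation.ReflTransGen Step

/-- A term is in normal form if no rewrite step applies to it. -/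
def NormalForm (n : Term) : Prop := ¬ ∃ m, Step n m

/-- `u ≈ v` : the normal forms of `u` and `v` coincide, i.e. they reach a common normal form. -/
def TermEquiv (u v : Term) : Prop := ∃ n, NormalForm n ∧ Steps u n ∧ Steps v n

def Term.sz : Term → ℕ
  | .var _ => 1
  | .projL t => t.sz + 1
  | .projR t => t.sz + 1
  | .join u v => u.sz + v.sz + 1

theorem Step.sz_lt {a b : Term} (h : Step a b) : b.sz < a.sz := by
  induction h <;> simp only [Term.sz] <;> omega

/-- The rewrite relation of the name algebra is terminating: the converse of `Step`
is well-founded, equivalently there is no infinite rewrite sequence. -/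
theorem step_terminating :
    WellFounded (fun b a => Step a b) ∧
    ∀ f : ℕ → Term, ¬ (∀ n : ℕ, Step (f n) (f (n + 1))) := by
  have wf : WellFounded (fun b a => Step a b) :=
    Subrelation.wf (fun h => Step.sz_lt h) (measure Term.sz).wf
  refine ⟨wf, fun f hf => ?_⟩
  have key : ∀ n, (f n).sz + n ≤ (f 0).sz := by
    intro n
    induction n with
    | zero => simp
    | succ k ih =>
      have := (hf k).sz_lt
      omega
  have := key ((f 0).sz + 1)
  omega
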